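/- For any step-size parameter γ > 0 and any sequences (yᵗ, zᵗ, xᵗ) generated by the DR splitting method, the following decrease estimate holds for every t ≥ 1: D_γ(yᵗ⁺¹, zᵗ⁺¹, xᵗ⁺¹) − D_γ(yᵗ, zᵗ, xᵗ) ≤ (1/γ)·((1 + γL)² + (5γl)/2 − 3/2)·‖yᵗ⁺¹ − yᵗ‖². -/

import Mathlib

open Filter Topology

lemma aux_line {E : Type*} [NormedAddCommGroup E] [InnerProductSpace ℝ E] [CompleteSpace E]
    (f : E → ℝ) (u d p c : E) (k : ℝ) (h : HasGradientAt f p u) :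
    HasDerivAt (fun s : ℝ => f (u + s • d) + k * ‖u + s • d - c‖ ^ 2)
      (inner ℝ p d + k * (2 * inner ℝ (u - c) d)) 0 := by
  have hl : HasDerivAt (fun s : ℝ => u + s • d) d 0 := by
    simpa using ((hasDerivAt_id (0:ℝ)).smul_const d).const_add u
  have h1 : HasFDerivAt f (InnerProductSpace.toDual ℝ E p) (u + (0:ℝ) • d) := by
    simpa using h.hasFDerivAt
  have h2 := h1.comp_hasDerivAt (0:ℝ) hl
  have h3 := (hl.sub_const c).norm_sq
  have h4 := h2.add (h3.const_mul k)
  have e : inner ℝ p d + k * (2 * inner ℝ (u - c) d)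
      = (InnerProductSpace.toDual ℝ E p) d + k * (2 * inner ℝ (u + (0:ℝ) • d - c) d) := by simp
  rw [e]
  exact h4

lemma aux_conv {E : Type*} [NormedAddCommGroup E] [InnerProductSpace ℝ E] [CompleteSpace E]
    (f : E → ℝ) (l : ℝ) (u v p : E) (h : HasGradientAt f p u)
    (hconv : ConvexOn ℝ Set.univ (fun w => f w + l / 2 * ‖w‖ ^ 2)) :
    f u + inner ℝ p (v - u) - l / 2 * ‖v - u‖ ^ 2 ≤ f v := by
  have hd := aux_line f u (v - u) p 0 (l / 2) h
  have hc : ConvexOn ℝ Set.univ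
      (fun s : ℝ => f (u + s • (v - u)) + l / 2 * ‖u + s • (v - u) - 0‖ ^ 2) := by
    have := hconv.comp_affineMap (AffineMap.lineMap u v : ℝ →ᵃ[ℝ] E)
    simpa [AffineMap.lineMap_apply, Function.comp_def, add_comm] using this
  have := hc.le_slope_of_hasDerivAt (Set.mem_univ 0) (Set.mem_univ 1) one_pos hd
  simp [slope_def_field] at this
  have e1 := norm_sub_sq_real v u
  have e2 : inner ℝ u (v - u) = inner ℝ v u - ‖u‖ ^ 2 := by
    rw [inner_sub_right, real_inner_self_eq_norm_sq, real_inner_comm]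
  rw [e2] at this
  rw [e1]
  linarith

lemma aux_opt {E : Type*} [NormedAddCommGroup E] [InnerProductSpace ℝ E] [CompleteSpace E]
    (f : E → ℝ) (γ : ℝ) (hγ : 0 < γ) (u p c : E) (h : HasGradientAt f p u)
    (hm : ∀ w, f u + 1 / (2 * γ) * ‖u - c‖ ^ 2 ≤ f w + 1 / (2 * γ) * ‖w - c‖ ^ 2) :
    c = u + γ • p := by
  have key : ∀ d, inner ℝ (u + γ • p - c) d = (0:ℝ) := by
    intro d
    have hd := aux_line f u d p c (1 / (2 * γ)) h
    have hmin : IsLocalMin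
        (fun s : ℝ => f (u + s • d) + 1 / (2 * γ) * ‖u + s • d - c‖ ^ 2) 0 :=
      Filter.Eventually.of_forall fun s => by simpa using hm (u + s • d)
    have := hmin.hasDerivAt_eq_zero hd
    field_simp at this
    have e : u + γ • p - c = γ • p + (u - c) := by abel
    rw [e, inner_add_left, real_inner_smul_left]
    linarith
  have := key (u + γ • p - c)
  rw [inner_self_eq_zero] at this
  exact (sub_eq_zero.mp this).symm

lemma aux_real {E : Type*} [NormedAddCommGroup E] [InnerProductSpace ℝ E] [CompleteSpace E]
    (L l γ fy fy1 gz gz1 : ℝ) (hL : 0 < L) (hγ : 0 < γ) (y y1 z z1 p p1 : E)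
    (hlip : ‖p1 - p‖ ≤ L * ‖y1 - y‖)
    (hc1 : fy1 + inner ℝ p1 (y - y1) - l / 2 * ‖y - y1‖ ^ 2 ≤ fy)
    (hc2 : fy + inner ℝ p (y1 - y) - l / 2 * ‖y1 - y‖ ^ 2 ≤ fy1)
    (hzy : z = y1 + γ • (p1 - p))
    (hz : gz1 + 1 / (2 * γ) * ‖(2:ℝ) • y1 - (y1 + γ • p1) - z1‖ ^ 2
      ≤ gz + 1 / (2 * γ) * ‖(2:ℝ) • y1 - (y1 + γ • p1) - z‖ ^ 2) :
    fy1 + gz1 + (-(1 / (2 * γ)) * ‖y1 - z1‖ ^ 2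
        + 1 / γ * inner ℝ (y1 + γ • p1 + (z1 - y1) - y1) (z1 - y1))
      ≤ fy + gz + (-(1 / (2 * γ)) * ‖y - z‖ ^ 2
        + 1 / γ * inner ℝ (y1 + γ • p1 - y) (z - y))
        + 1 / γ * ((1 + γ * L) ^ 2 + 5 * γ * l / 2 - 3 / 2) * ‖y1 - y‖ ^ 2 := by
  obtain ⟨d, rfl⟩ : ∃ d, y1 = y + d := ⟨y1 - y, by abel⟩
  obtain ⟨q, rfl⟩ : ∃ q, p1 = p + q := ⟨p1 - p, by abel⟩
  obtain ⟨e, rfl⟩ : ∃ e, z1 = y + d + e := ⟨z1 - (y + d), by abel⟩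
  subst hzy
  have a1 : (2:ℝ) • (y + d) - (y + d + γ • (p + q)) - (y + d + e) = -(γ • p + γ • q + e) := by
    module
  have a2 : (2:ℝ) • (y + d) - (y + d + γ • (p + q)) - (y + d + γ • (p + q - p))
      = -(γ • p + (2 * γ) • q) := by module
  have a3 : y + d + γ • (p + q) + (y + d + e - (y + d)) - (y + d) = γ • p + γ • q + e := by
    module
  have a4 : y + d + γ • (p + q) - y = d + γ • p + γ • q := by module
  have a5 : y + d + γ • (p + q - p) - y = d + γ • q := by module
  have a6 : y - (y + d + γ • (p + q - p)) = - (d + γ • q) := by module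
  have a7 : y + d - (y + d + e) = - e := by module
  have a8 : y - (y + d) = - d := by module
  have a9 : y + d + e - (y + d) = e := by module
  have a10 : p + q - p = q := by module
  have a11 : y + d - y = d := by module
  rw [a1, a2] at hz
  rw [a8] at hc1
  rw [a11] at hc2
  rw [a10, a11] at hlip
  rw [a3, a4, a5, a6, a7, a9, a11]
  have hq2 : ‖q‖ ^ 2 ≤ L ^ 2 * ‖d‖ ^ 2 := by
    rw [← mul_pow]; gcongr
  have hqd : inner ℝ q d ≤ L * ‖d‖ ^ 2 := by
    calc inner ℝ q d ≤ ‖q‖ * ‖d‖ := real_inner_le_norm q d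
      _ ≤ (L * ‖d‖) * ‖d‖ := by gcongr
      _ = _ := by ring
  simp only [norm_neg, inner_neg_right, ← real_inner_self_eq_norm_sq, inner_add_left,
    inner_add_right, real_inner_smul_left, real_inner_smul_right] at hz hc1 hc2 hq2 hqd ⊢
  rw [real_inner_comm p q, real_inner_comm p e, real_inner_comm q e] at *
  rw [real_inner_comm q d] at *
  generalize inner ℝ p p = pp at *
  generalize inner ℝ p q = pq at *
  generalize inner ℝ p e = pe at *
  generalize inner ℝ q q = qq at *
  generalize inner ℝ q e = qe at *
  generalize inner ℝ e e = ee at *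
  generalize inner ℝ p d = pd at *
  generalize (inner ℝ q d : ℝ) = qd at *
  generalize inner ℝ d d = dd at *
  have b1 := mul_le_mul_of_nonneg_left hz hγ.le
  have b2 := mul_le_mul_of_nonneg_left hc1 hγ.le
  have b3 := mul_le_mul_of_nonneg_left hc2 hγ.le
  have b4 := mul_le_mul_of_nonneg_left hq2 (sq_nonneg γ)
  have b5 := mul_le_mul_of_nonneg_left hqd hγ.le
  refine le_of_mul_le_mul_left ?_ hγ
  field_simp at b1 ⊢
  ring_nf at b1 b2 b3 b4 b5 ⊢
  linarith

theorem stmt1 {n : ℕ}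
    (f : EuclideanSpace ℝ (Fin n) → ℝ)
    (f' : EuclideanSpace ℝ (Fin n) → EuclideanSpace ℝ (Fin n))
    (L l : ℝ) (hL : 0 < L)
    (hgrad : ∀ w, HasGradientAt f (f' w) w)
    (hlip : LipschitzWith L.toNNReal f')
    (hconv : ConvexOn ℝ Set.univ (fun w => f w + l / 2 * ‖w‖ ^ 2))
    (g : EuclideanSpace ℝ (Fin n) → EReal)
    (hg_proper : ∃ w, g w ≠ ⊤) (hg_ne_bot : ∀ w, g w ≠ ⊥)
    (hg_lsc : LowerSemicontinuous g)
    (γ : ℝ) (hγ : 0 < γ)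
    (x y z : ℕ → EuclideanSpace ℝ (Fin n))
    (hy : ∀ t, ∀ w, f (y (t + 1)) + 1 / (2 * γ) * ‖y (t + 1) - x t‖ ^ 2
        ≤ f w + 1 / (2 * γ) * ‖w - x t‖ ^ 2)
    (hz : ∀ t, ∀ w, g (z (t + 1))
          + ((1 / (2 * γ) * ‖(2 : ℝ) • y (t + 1) - x t - z (t + 1)‖ ^ 2 : ℝ) : EReal)
        ≤ g w + ((1 / (2 * γ) * ‖(2 : ℝ) • y (t + 1) - x t - w‖ ^ 2 : ℝ) : EReal))
    (hx : ∀ t, x (t + 1) = x t + (z (t + 1) - y (t + 1)))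
    (D : EuclideanSpace ℝ (Fin n) → EuclideanSpace ℝ (Fin n) → EuclideanSpace ℝ (Fin n) → EReal)
    (hD : ∀ a b c, D a b c
        = (f a : EReal) + g b
          + ((-(1 / (2 * γ)) * ‖a - b‖ ^ 2 + 1 / γ * (inner ℝ (c - a) (b - a) : ℝ) : ℝ) : EReal)) :
    ∀ t, 1 ≤ t →
      D (y (t + 1)) (z (t + 1)) (x (t + 1))
        ≤ D (y t) (z t) (x t)
          + ((1 / γ * ((1 + γ * L) ^ 2 + 5 * γ * l / 2 - 3 / 2) * ‖y (t + 1) - y t‖ ^ 2 : ℝ) : EReal) := by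
  intro t ht
  obtain ⟨t, rfl⟩ : ∃ k, t = k + 1 := ⟨t - 1, by omega⟩
  have o1 := aux_opt f γ hγ _ _ _ (hgrad (y (t + 1))) (hy t)
  have o2 := aux_opt f γ hγ _ _ _ (hgrad (y (t + 1 + 1))) (hy (t + 1))
  have c1 := aux_conv f l (y (t + 1 + 1)) (y (t + 1)) _ (hgrad _) hconv
  have c2 := aux_conv f l (y (t + 1)) (y (t + 1 + 1)) _ (hgrad _) hconv
  have hl : ‖f' (y (t + 1 + 1)) - f' (y (t + 1))‖ ≤ L * ‖y (t + 1 + 1) - y (t + 1)‖ := by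
    have := hlip.norm_sub_le (y (t + 1 + 1)) (y (t + 1))
    rwa [Real.coe_toNNReal _ hL.le] at this
  have hzy : z (t + 1) = y (t + 1 + 1) + γ • (f' (y (t + 1 + 1)) - f' (y (t + 1))) := by
    have h := hx t
    rw [o2] at h
    rw [o1] at h
    rw [smul_sub, ← add_sub_assoc, h]
    abel
  have hz' := hz (t + 1) (z (t + 1))
  rw [hD, hD, hx (t + 1)]
  have hb := hg_ne_bot (z (t + 1))
  have hb1 := hg_ne_bot (z (t + 1 + 1))
  generalize g (z (t + 1)) = G at *
  generalize g (z (t + 1 + 1)) = G1 at *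
  induction G with
  | bot => exact absurd rfl hb
  | top => 
    simp only [EReal.coe_add_top, EReal.top_add_coe, le_top]
  | coe gz =>
    induction G1 with
    | bot => exact absurd rfl hb1
    | top => 
      rw [EReal.top_add_coe, top_le_iff] at hz'
      exact absurd hz' (by rw [← EReal.coe_add]; exact EReal.coe_ne_top _)
    | coe gz1 =>
      have hz2 := hz'
      rw [← EReal.coe_add, ← EReal.coe_add, EReal.coe_le_coe_iff] at hz2
      rw [← EReal.coe_add, ← EReal.coe_add, ← EReal.coe_add, ← EReal.coe_add, ← EReal.coe_add,
        EReal.coe_le_coe_iff]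
      rw [o2] at hz2 ⊢
      exact aux_real L l γ _ _ gz gz1 hL hγ _ _ _ _ _ _ hl c1 c2 hzy hz2
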